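/- arXiv:0811.0064 — 3 statements merged into one kernel-verified Lean document; each statement's English description precedes it below -/
import Mathlib

section
/- Let N ≥ 1 be an integer, h = 1/N, and let C₀, …, C_N be the optimal coefficients. Then Σ_{β=0}^N C_β = 1. -/
/-!
Write `a = exp h`, `l = λ₁`. The parts of the coefficients free of `K(h)` add up to
`h + (N - 1) h = 1`. The parts carrying `K(h)` cancel: with `S = l + ⋯ + l ^ (N - 1)`, a sum
invariant under `β ↦ N - β`, their total is
`(l - l ^ N) (1 + a) + ((l - a) + (l a - 1)) S = (1 + a) ((l - l ^ N) + (l - 1) S)`,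
which vanishes by the geometric sum `(l - 1) S = l ^ N - l`. Hence neither the value of `K(h)`
nor that of `λ₁` matters, and the argument covers `l = 1` as well.
-/

open Real MeasureTheory Finset

/-- ψ₂(x) = (sign x)/2 · ((e^x − e^{−x})/2 − x). -/
noncomputable def psi2 (x : ℝ) : ℝ :=
  Real.sign x / 2 * ((Real.exp x - Real.exp (-x)) / 2 - x)

/-- λ₁ as a function of N (with h = 1/N). -/
noncomputable def lam1 (N : ℕ) : ℝ :=
  let h : ℝ := 1 / N
  (h * (Real.exp (2 * h) + 1) - Real.exp (2 * h) + 1 -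
      (Real.exp h - 1) *
        Real.sqrt (h ^ 2 * (Real.exp h + 1) ^ 2 + 2 * h * (1 - Real.exp h))) /
    (1 - Real.exp (2 * h) + 2 * h * Real.exp h)

/-- K(h) as a function of N (with h = 1/N). -/
noncomputable def Kh (N : ℕ) : ℝ :=
  let h : ℝ := 1 / N
  (2 * Real.exp h - 2 - h * Real.exp h - h) * (lam1 N - 1) /
    (2 * (Real.exp h - 1) ^ 2 * (lam1 N + lam1 N ^ (N + 1)))

/-- The optimal coefficients C_β, 0 ≤ β ≤ N. -/
noncomputable def Copt (N : ℕ) (β : ℕ) : ℝ :=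
  let h : ℝ := 1 / N
  if β = 0 then
    (Real.exp h - 1 - h) / (Real.exp h - 1) - Kh N * (lam1 N - lam1 N ^ N)
  else if β = N then
    (h * Real.exp h - Real.exp h + 1) / (Real.exp h - 1) -
      Kh N * (lam1 N - lam1 N ^ N) * Real.exp h
  else
    h - Kh N * ((lam1 N - Real.exp h) * lam1 N ^ β +
      (lam1 N * Real.exp h - 1) * lam1 N ^ (N - β))

/-- The quadratic form Q(C) (square of the norm of the error functional). -/
noncomputable def Q (N : ℕ) (C : ℕ → ℝ) : ℝ :=
  let h : ℝ := 1 / N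
  (∑ β ∈ Finset.range (N + 1), ∑ β' ∈ Finset.range (N + 1),
      C β * C β' * psi2 (h * β - h * β')) -
    2 * ∑ β ∈ Finset.range (N + 1), C β * ∫ x in (0:ℝ)..1, psi2 (x - h * β) +
    ∫ x in (0:ℝ)..1, ∫ y in (0:ℝ)..1, psi2 (x - y)

theorem stmt2 (N : ℕ) (hN : 1 ≤ N) :
    ∑ β ∈ Finset.range (N + 1), Copt N β = 1 := by
  obtain ⟨M, rfl⟩ : ∃ M, N = M + 1 := ⟨N - 1, by omega⟩
  have hM : ((M : ℝ) + 1) ≠ 0 := by positivity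
  obtain ⟨h, hh⟩ : ∃ h : ℝ, h = 1 / ((M + 1 : ℕ) : ℝ) := ⟨_, rfl⟩
  have hpos : 0 < h := by rw [hh]; positivity
  have hMh : ((M : ℝ) + 1) * h = 1 := by
    rw [hh]; push_cast; field_simp
  have ha : Real.exp h - 1 ≠ 0 := by
    have := Real.add_one_lt_exp hpos.ne'
    intro h0
    linarith
  have hmid : ∀ i ∈ Finset.range M, Copt (M + 1) (i + 1) =
      h - Kh (M + 1) * ((lam1 (M + 1) - Real.exp h) * lam1 (M + 1) ^ (i + 1) +
        (lam1 (M + 1) * Real.exp h - 1) * lam1 (M + 1) ^ (M - i)) := by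
    intro i hi
    have hi' : i ≠ M := (Finset.mem_range.mp hi).ne
    simp [Copt, hh, hi']
  have h0 : Copt (M + 1) 0 = (Real.exp h - 1 - h) / (Real.exp h - 1) -
      Kh (M + 1) * (lam1 (M + 1) - lam1 (M + 1) ^ (M + 1)) := by
    simp [Copt, hh]
  have h1 : Copt (M + 1) (M + 1) = (h * Real.exp h - Real.exp h + 1) / (Real.exp h - 1) -
      Kh (M + 1) * (lam1 (M + 1) - lam1 (M + 1) ^ (M + 1)) * Real.exp h := by
    simp [Copt, hh]
  rw [Finset.sum_range_succ, Finset.sum_range_succ', Finset.sum_congr rfl hmid, h0, h1]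
  generalize lam1 (M + 1) = l
  generalize Kh (M + 1) = K
  generalize Real.exp h = a at *
  have hrefl : ∑ i ∈ Finset.range M, l ^ (M - i) = ∑ i ∈ Finset.range M, l ^ (i + 1) := by
    rw [← Finset.sum_range_reflect]
    refine Finset.sum_congr rfl fun i hi => ?_
    have := Finset.mem_range.mp hi
    congr 1
    omega
  have hgeom : (∑ i ∈ Finset.range M, l ^ (i + 1)) * (l - 1) = l ^ (M + 1) - l := by
    have := geom_sum_mul l M
    simp only [pow_succ, ← Finset.sum_mul]
    linear_combination l * this
  have hends : (a - 1 - h) / (a - 1) + (h * a - a + 1) / (a - 1) = h := by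
    field_simp
    ring
  rw [Finset.sum_sub_distrib, ← Finset.mul_sum, Finset.sum_add_distrib, ← Finset.mul_sum,
    ← Finset.mul_sum, hrefl, Finset.sum_const, Finset.card_range, nsmul_eq_mul]
  linear_combination hMh + hends - K * (1 + a) * hgeom
end

section
/- Let N ≥ 1 be an integer, h = 1/N, and let C₀, …, C_N be the optimal coefficients. Then Σ_{β=0}^N C_β e^{−hβ} = 1 − e^{−1}, i.e., the quadrature sum with these coefficients integrates e^{−x} exactly over [0,1]. -/
/-!
Write `E = e^h`, `x = e^{-h}`, `L = λ₁` and `K = K(h)`. The proof uses only `E * x = 1`, `E ≠ 1` and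
`x ^ N = e⁻¹`: the values of `K` and `L` play no role. After multiplication by `x ^ β` each
interior coefficient is an increment of

  `n ↦ -(h / (E - 1)) x ^ n - K (L ^ (n + 1) x ^ n - L ^ (N - n) x ^ n)`

(`Copt_interior`), so the interior sum telescopes. In combination with the two boundary terms, the
multiples of `K` cancel identically and the remaining part is `1 - x ^ N`.
-/

open Real MeasureTheory Finset

/-- An interior term of the quadrature sum as a telescoping difference, with `E = e^h`, `x = e^{-h}`
and `c = h / (E - 1)`; the node is `n + 1` and `N = n + k + 2`. -/
lemma Copt_interior (E x L K h c : ℝ) (hEx : E * x = 1) (hc : c * (E - 1) = h) (n k : ℕ) :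
    (h - K * ((L - E) * L ^ (n + 1) + (L * E - 1) * L ^ (k + 1))) * x ^ (n + 1) =
      (-c * x ^ (n + 1) - K * (L ^ (n + 1 + 1) * x ^ (n + 1) - L ^ (k + 1) * x ^ (n + 1))) -
      (-c * x ^ n - K * (L ^ (n + 1) * x ^ n - L ^ (k + 2) * x ^ n)) := by
  subst hc
  linear_combination (c * x ^ n + K * L ^ (n + 1) * x ^ n - K * L ^ (k + 2) * x ^ n) * hEx

theorem stmt3 (N : ℕ) (hN : 1 ≤ N) :
    ∑ β ∈ Finset.range (N + 1), Copt N β * Real.exp (-((1 / N : ℝ) * β)) =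
      1 - Real.exp (-1) := by
  obtain ⟨m, rfl⟩ : ∃ m, N = m + 1 := ⟨N - 1, by omega⟩
  have hpos : (0 : ℝ) < 1 / ((m + 1 : ℕ) : ℝ) := by positivity
  have hNh : ((m + 1 : ℕ) : ℝ) * (1 / ((m + 1 : ℕ) : ℝ)) = 1 :=
    mul_one_div_cancel (by positivity)
  unfold Copt
  simp only
  generalize 1 / ((m + 1 : ℕ) : ℝ) = h at *
  generalize lam1 (m + 1) = L
  generalize Kh (m + 1) = K
  have hE1 : Real.exp h - 1 ≠ 0 := sub_ne_zero.2 (Real.one_lt_exp_iff.2 hpos).ne'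
  have hEx : Real.exp h * Real.exp (-h) = 1 := by rw [← Real.exp_add]; simp
  have hpow (n : ℕ) : Real.exp (-(h * n)) = Real.exp (-h) ^ n := by
    rw [← Real.exp_nat_mul]; ring_nf
  have hlast : Real.exp (-1) = Real.exp (-h) ^ (m + 1) := by
    rw [← hpow, mul_comm, hNh]
  simp only [hpow, hlast]
  generalize Real.exp h = E at *
  generalize Real.exp (-h) = x at *
  obtain ⟨c, hc⟩ : ∃ c, c * (E - 1) = h := ⟨h / (E - 1), div_mul_cancel₀ _ hE1⟩
  have h0 : (E - 1 - h) / (E - 1) = 1 - c := by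
    rw [div_eq_iff hE1]; linear_combination hc
  have h1 : (h * E - E + 1) / (E - 1) = c * E - 1 := by
    rw [div_eq_iff hE1]; linear_combination -E * hc
  rw [Finset.sum_range_succ, Finset.sum_range_succ', h0, h1]
  have hsum := Finset.sum_range_sub
    (fun n => -c * x ^ n - K * (L ^ (n + 1) * x ^ n - L ^ (m + 1 - n) * x ^ n)) m
  rw [Finset.sum_congr rfl (g := fun n =>
    (-c * x ^ (n + 1) - K * (L ^ (n + 1 + 1) * x ^ (n + 1) -
      L ^ (m + 1 - (n + 1)) * x ^ (n + 1))) -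
    (-c * x ^ n - K * (L ^ (n + 1) * x ^ n - L ^ (m + 1 - n) * x ^ n))), hsum]
  · have hm : m + 1 - m = 1 := by omega
    simp only [hm, Nat.sub_zero, if_true, Nat.add_eq_zero_iff, one_ne_zero, and_false, if_false,
      pow_zero, zero_add, pow_one]
    linear_combination (c * x ^ m - K * (L - L ^ (m + 1)) * x ^ m) * hEx
  · intro n hn
    obtain ⟨k, rfl⟩ : ∃ k, m = n + k + 1 := ⟨m - n - 1, by have := Finset.mem_range.1 hn; omega⟩
    have e1 : n + k + 1 + 1 - (n + 1) = k + 1 := by omega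
    have e2 : n + k + 1 + 1 - n = k + 2 := by omega
    have e3 : n + 1 ≠ n + k + 1 + 1 := by omega
    rw [if_neg n.succ_ne_zero, if_neg e3, e1, e2]
    exact Copt_interior E x L K h c hEx hc n k
end

section
/- Let N ≥ 1 be an integer and h = 1/N. The linear system in the unknowns C₀, …, C_N, b₀, d consisting of the equations Σ_{γ=0}^N C_γ ψ₂(hβ − hγ) + b₀ + d·e^{−hβ} = ∫₀¹ ψ₂(x − hβ) dx for 0 ≤ β ≤ N, together with Σ_{γ=0}^N C_γ = 1 and Σ_{γ=0}^N C_γ e^{−hγ} = 1 − e^{−1}, has exactly one solution (C₀, …, C_N, b₀, d) in ℝ^{N+3}. -/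
/-!
The system is square, so it suffices that the homogeneous system has only the zero solution.
Let `a γ = hγ` be the nodes. If `C` satisfies `∑ C γ = 0` and `∑ C γ * exp (-a γ) = 0`, then
pairing the first block of equations with `C` gives `∑ ∑ C β C γ ψ₂(a β - a γ) = 0`. The kernel
`ψ₂(a - b)` is conditionally positive definite: up to terms which are annihilated by the two
constraints it equals `∫₀¹ g_a g_b`, where `g_a(x) = max 0 (1 - exp (x - a))` is a truncated
fundamental solution of `D² - D` (`integral_trunc_mul`). Hence the quadratic form is
`∫₀¹ (∑ C γ g_{a γ})²` (`integral_sq_eq`), and its vanishing forces the continuous function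
`∑ C γ g_{a γ}` to vanish on `[0, 1]`. As `g_a` vanishes exactly on `[a, ∞)`, evaluating at the
nodes from right to left gives `C γ = 0` for `γ ≥ 1`, and `∑ C γ = 0` gives `C 0 = 0`. Then `b₀`
and `d` vanish because `1` and `exp (-x)` are linearly independent on two nodes.
-/

open Real MeasureTheory Finset

/-- The truncated fundamental solution `g_a(x) = 1 - exp (x - a)` for `x ≤ a`, and `0` for
`x ≥ a`, of the operator `D² - D`. -/
noncomputable def trunc (a x : ℝ) : ℝ := max 0 (1 - Real.exp (x - a))

lemma trunc_of_le {a x : ℝ} (h : x ≤ a) : trunc a x = 1 - Real.exp (x - a) := by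
  have : Real.exp (x - a) ≤ 1 := Real.exp_le_one_iff.mpr (by linarith)
  exact max_eq_right (by linarith)

lemma trunc_of_ge {a x : ℝ} (h : a ≤ x) : trunc a x = 0 := by
  have : 1 ≤ Real.exp (x - a) := Real.one_le_exp (by linarith)
  exact max_eq_left (by linarith)

lemma continuous_trunc (a : ℝ) : Continuous (trunc a) := by
  unfold trunc
  fun_prop

lemma psi2_of_nonpos {t : ℝ} (h : t ≤ 0) :
    psi2 t = -(1 / 2) * ((Real.exp t - Real.exp (-t)) / 2 - t) := by
  unfold psi2
  rcases h.lt_or_eq with h | rfl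
  · rw [Real.sign_of_neg h]; ring
  · simp

lemma psi2_neg (t : ℝ) : psi2 (-t) = psi2 t := by
  unfold psi2
  rw [Real.sign_neg, neg_neg]; ring

lemma integral_trunc_mul_of_le {a b : ℝ} (ha : 0 ≤ a) (hab : a ≤ b) (hb : b ≤ 1) :
    ∫ x in (0:ℝ)..1, trunc a x * trunc b x =
      psi2 (a - b) + (a / 2 - 1 / 2 + Real.exp (-a)) + (b / 2 - 1 / 2 + Real.exp (-b)) +
        (-Real.exp (-a) / 4 - Real.exp a / 4) * Real.exp (-b) +
        (-Real.exp (-b) / 4 - Real.exp b / 4) * Real.exp (-a) := by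
  have hc : Continuous fun x => trunc a x * trunc b x :=
    (continuous_trunc a).mul (continuous_trunc b)
  rw [← intervalIntegral.integral_add_adjacent_intervals (b := a)
    (hc.intervalIntegrable _ _) (hc.intervalIntegrable _ _)]
  have h2 : ∫ x in a..1, trunc a x * trunc b x = 0 := by
    rw [intervalIntegral.integral_congr (g := fun _ => (0:ℝ))]
    · simp
    · intro x hx
      rw [Set.uIcc_of_le (hab.trans hb)] at hx
      simp [trunc_of_ge hx.1]
  have h1 : ∫ x in (0:ℝ)..a, trunc a x * trunc b x =
      ∫ x in (0:ℝ)..a, (1 - Real.exp (x - a)) * (1 - Real.exp (x - b)) := by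
    apply intervalIntegral.integral_congr
    intro x hx
    rw [Set.uIcc_of_le ha] at hx
    simp only [trunc_of_le hx.2, trunc_of_le (hx.2.trans hab)]
  have h3 : ∫ x in (0:ℝ)..a, (1 - Real.exp (x - a)) * (1 - Real.exp (x - b)) =
      (a - Real.exp (a - a) - Real.exp (a - b) + Real.exp (a - a) * Real.exp (a - b) / 2) -
      (0 - Real.exp (0 - a) - Real.exp (0 - b) + Real.exp (0 - a) * Real.exp (0 - b) / 2) := by
    apply intervalIntegral.integral_eq_sub_of_hasDerivAt
      (f := fun x => x - Real.exp (x - a) - Real.exp (x - b) +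
        Real.exp (x - a) * Real.exp (x - b) / 2)
    · intro x _
      have e1 : ∀ c : ℝ, HasDerivAt (fun x => Real.exp (x - c)) (Real.exp (x - c)) x := by
        intro c
        simpa using ((hasDerivAt_id x).sub_const c).exp
      refine (((hasDerivAt_id x).sub (e1 a)).sub (e1 b)).add
        (((e1 a).mul (e1 b)).div_const 2) |>.congr_deriv ?_
      ring
    · exact Continuous.intervalIntegrable (by fun_prop) _ _
  rw [h1, h2, h3, psi2_of_nonpos (sub_nonpos.mpr hab)]
  simp only [sub_self, zero_sub, neg_sub, Real.exp_zero]
  rw [sub_eq_add_neg a b, sub_eq_add_neg b a, Real.exp_add, Real.exp_add]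
  ring

/-- Modulo functions of the form `p a`, `p b`, `q a * exp (-b)`, `q b * exp (-a)`, the kernel
`ψ₂(a - b)` is the Gram kernel of the functions `trunc a` in `L²(0, 1)`. -/
lemma integral_trunc_mul {a b : ℝ} (ha : 0 ≤ a) (ha1 : a ≤ 1) (hb : 0 ≤ b) (hb1 : b ≤ 1) :
    ∫ x in (0:ℝ)..1, trunc a x * trunc b x =
      psi2 (a - b) + (a / 2 - 1 / 2 + Real.exp (-a)) + (b / 2 - 1 / 2 + Real.exp (-b)) +
        (-Real.exp (-a) / 4 - Real.exp a / 4) * Real.exp (-b) +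
        (-Real.exp (-b) / 4 - Real.exp b / 4) * Real.exp (-a) := by
  rcases le_total a b with h | h
  · exact integral_trunc_mul_of_le ha h hb1
  · have := integral_trunc_mul_of_le hb h ha1
    rw [← psi2_neg, neg_sub] at this
    simp_rw [mul_comm (trunc a _)]
    rw [this]; ring

/-- Under the two orthogonality constraints the quadratic form of `ψ₂` is a squared `L²` norm. -/
lemma integral_sq_eq {ι : Type*} [Fintype ι] (a C : ι → ℝ) (ha : ∀ i, 0 ≤ a i)
    (ha1 : ∀ i, a i ≤ 1) (h0 : ∑ i, C i = 0) (h1 : ∑ i, C i * Real.exp (-a i) = 0) :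
    ∫ x in (0:ℝ)..1, (∑ i, C i * trunc (a i) x) ^ 2 =
      ∑ i, C i * ∑ j, C j * psi2 (a i - a j) := by
  have hc : ∀ i j, Continuous fun x => C i * trunc (a i) x * (C j * trunc (a j) x) := by
    intro i j
    have := continuous_trunc (a i)
    have := continuous_trunc (a j)
    fun_prop
  simp_rw [sq, Finset.sum_mul_sum]
  rw [intervalIntegral.integral_finsetSum fun i _ =>
    (continuous_finsetSum _ fun j _ => hc i j).intervalIntegrable _ _]
  set p : ℝ → ℝ := fun t => t / 2 - 1 / 2 + Real.exp (-t) with hp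
  set q : ℝ → ℝ := fun t => -Real.exp (-t) / 4 - Real.exp t / 4 with hq
  have key : ∀ i, ∫ x in (0:ℝ)..1, ∑ j, C i * trunc (a i) x * (C j * trunc (a j) x) =
      C i * ∑ j, C j * psi2 (a i - a j) + C i * (∑ j, C j * p (a j)) +
        C i * Real.exp (-a i) * ∑ j, C j * q (a j) := by
    intro i
    rw [intervalIntegral.integral_finsetSum fun j _ => (hc i j).intervalIntegrable _ _]
    have : ∀ j, ∫ x in (0:ℝ)..1, C i * trunc (a i) x * (C j * trunc (a j) x) =
        C i * (C j * psi2 (a i - a j)) + C i * (C j * p (a j)) +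
          C i * Real.exp (-a i) * (C j * q (a j)) + C i * p (a i) * C j +
          C i * q (a i) * (C j * Real.exp (-a j)) := by
      intro j
      have e : ∀ x, C i * trunc (a i) x * (C j * trunc (a j) x) =
          (C i * C j) * (trunc (a i) x * trunc (a j) x) := fun x => by ring
      simp_rw [e]
      rw [intervalIntegral.integral_const_mul,
        integral_trunc_mul (ha i) (ha1 i) (ha j) (ha1 j)]
      simp only [hp, hq]
      ring
    simp_rw [this, Finset.sum_add_distrib, ← Finset.mul_sum]
    rw [h0, h1]; ring
  simp_rw [key, Finset.sum_add_distrib, ← Finset.sum_mul]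
  rw [h0, h1]; ring

/-- The homogeneous system, written with arbitrary `h` such that all nodes lie in `[0, 1]`, has
only the trivial solution. -/
lemma homogeneous_eq_zero {N : ℕ} (hN : 1 ≤ N) {h : ℝ} (hh : 0 < h) (hNh : h * N ≤ 1)
    (C : Fin (N + 1) → ℝ) (b d : ℝ)
    (H : ∀ β : Fin (N + 1), (∑ γ : Fin (N + 1), C γ * psi2 (h * (β : ℕ) - h * (γ : ℕ))) + b +
      d * Real.exp (-(h * (β : ℕ))) = 0)
    (h0 : ∑ γ, C γ = 0) (h1 : ∑ γ : Fin (N + 1), C γ * Real.exp (-(h * (γ : ℕ))) = 0) :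
    C = 0 ∧ b = 0 ∧ d = 0 := by
  have ha : ∀ i : Fin (N + 1), 0 ≤ h * (i : ℕ) := fun i => by positivity
  have ha1 : ∀ i : Fin (N + 1), h * (i : ℕ) ≤ 1 := fun i =>
    le_trans (by gcongr; exact Nat.lt_succ_iff.mp i.2) hNh
  have hQ := integral_sq_eq (fun i : Fin (N + 1) => h * (i : ℕ)) C ha ha1 h0 h1
  have hQ0 : ∑ i : Fin (N + 1), C i * ∑ j : Fin (N + 1),
      C j * psi2 (h * (i : ℕ) - h * (j : ℕ)) = 0 := by
    have : ∀ i : Fin (N + 1), C i * ∑ j : Fin (N + 1), C j * psi2 (h * (i : ℕ) - h * (j : ℕ)) =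
        -b * C i + -d * (C i * Real.exp (-(h * (i : ℕ)))) := fun i => by
      linear_combination C i * H i
    simp_rw [this, Finset.sum_add_distrib, ← Finset.mul_sum]
    rw [h0, h1]; ring
  rw [hQ0] at hQ
  have hcont : Continuous fun x => ∑ i : Fin (N + 1), C i * trunc (h * (i : ℕ)) x :=
    continuous_finsetSum _ fun i _ => (continuous_trunc _).const_mul _
  have hv : ∀ x ∈ Set.Icc (0:ℝ) 1, ∑ i : Fin (N + 1), C i * trunc (h * (i : ℕ)) x = 0 := by
    by_contra! hne
    obtain ⟨x, hx, hxne⟩ := hne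
    have := intervalIntegral.integral_pos (zero_lt_one (α := ℝ)) (hcont.pow 2).continuousOn
      (fun x _ => sq_nonneg _) ⟨x, hx, lt_of_le_of_ne (sq_nonneg _) (pow_ne_zero 2 hxne).symm⟩
    exact this.ne' hQ
  -- Downward induction on the index `i`: at the node `i - 1` only the terms with index at least
  -- `i` are nonzero, and those beyond `i` vanish by the induction hypothesis.
  have hsucc : ∀ n : ℕ, ∀ i : Fin (N + 1), 1 ≤ (i : ℕ) → N < (i : ℕ) + n → C i = 0 := by
    intro n
    induction n with
    | zero => intro i _ hi; omega
    | succ n ih =>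
      intro i hi1 hi
      have hx : h * ((i : ℕ) - 1 : ℝ) ∈ Set.Icc (0:ℝ) 1 := by
        have : (1:ℝ) ≤ (i : ℕ) := by exact_mod_cast hi1
        constructor
        · exact mul_nonneg hh.le (by linarith)
        · nlinarith [ha1 i]
      have hs := hv _ hx
      rw [Finset.sum_eq_single i] at hs
      · rw [trunc_of_le (by nlinarith)] at hs
        have : Real.exp (h * ((i : ℕ) - 1 : ℝ) - h * (i : ℕ)) < 1 :=
          Real.exp_lt_one_iff.mpr (by nlinarith)
        rcases mul_eq_zero.mp hs with hs | hs
        · exact hs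
        · linarith
      · intro j _ hji
        have hji' : (j : ℕ) ≠ i := fun e => hji (Fin.ext e)
        rcases lt_or_gt_of_ne hji' with hlt | hgt
        · rw [trunc_of_ge, mul_zero]
          have : ((j : ℕ) : ℝ) + 1 ≤ (i : ℕ) := by exact_mod_cast hlt
          gcongr
          linarith
        · rw [ih j (by omega) (by omega), zero_mul]
      · simp
  have hC' : ∀ i : Fin (N + 1), i ≠ 0 → C i = 0 := fun i hi =>
    hsucc (N + 1) i (Nat.one_le_iff_ne_zero.mpr fun e => hi (Fin.ext e)) (by omega)
  have hC : C = 0 := by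
    funext i
    by_cases hi : i = 0
    · rw [Finset.sum_eq_single 0 (fun j _ hj => hC' j hj) (by simp)] at h0
      rw [hi, h0]; rfl
    · exact hC' i hi
  subst hC
  have H0 := H ⟨0, by omega⟩
  have H1 := H ⟨1, by omega⟩
  simp at H0 H1
  have hlt : Real.exp (-h) < 1 := Real.exp_lt_one_iff.mpr (by linarith)
  have hd : d = 0 := by
    have : d * (1 - Real.exp (-h)) = 0 := by linear_combination H0 - H1
    rcases mul_eq_zero.mp this with h | h
    · exact h
    · linarith
  exact ⟨rfl, by rw [hd] at H0; linarith, hd⟩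

/-- The linear map given by the left-hand side of the system. -/
noncomputable def systemMap (N : ℕ) (h : ℝ) :
    ((Fin (N + 1) → ℝ) × ℝ × ℝ) →ₗ[ℝ] ((Fin (N + 1) → ℝ) × ℝ × ℝ) where
  toFun p := (fun β => (∑ γ : Fin (N + 1), p.1 γ * psi2 (h * (β : ℕ) - h * (γ : ℕ))) + p.2.1 +
      p.2.2 * Real.exp (-(h * (β : ℕ))),
    ∑ γ : Fin (N + 1), p.1 γ, ∑ γ : Fin (N + 1), p.1 γ * Real.exp (-(h * (γ : ℕ))))
  map_add' p q := by
    ext <;> simp [add_mul, Finset.sum_add_distrib]; ring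
  map_smul' c p := by
    ext <;> simp [mul_assoc, Finset.mul_sum, mul_add]

theorem stmt9 (N : ℕ) (hN : 1 ≤ N) :
    let h : ℝ := 1 / N
    ∃! p : (Fin (N + 1) → ℝ) × ℝ × ℝ,
      (∀ β : Fin (N + 1),
          (∑ γ : Fin (N + 1), p.1 γ * psi2 (h * (β : ℕ) - h * (γ : ℕ))) + p.2.1 +
              p.2.2 * Real.exp (-(h * (β : ℕ))) =
            ∫ x in (0:ℝ)..1, psi2 (x - h * (β : ℕ))) ∧
        (∑ γ : Fin (N + 1), p.1 γ) = 1 ∧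
        (∑ γ : Fin (N + 1), p.1 γ * Real.exp (-(h * (γ : ℕ)))) = 1 - Real.exp (-1) := by
  intro h
  have hN0 : (0:ℝ) < N := by exact_mod_cast hN
  have hinj : Function.Injective (systemMap N h) := by
    rw [injective_iff_map_eq_zero]
    rintro ⟨C, b, d⟩ hp
    obtain ⟨hC, hb, hd⟩ := homogeneous_eq_zero hN (h := h) (by positivity)
      (by simp [h, hN0.ne']) C b d (fun β => congrFun (congrArg Prod.fst hp) β)
      (congrArg (fun r => r.2.1) hp) (congrArg (fun r => r.2.2) hp)
    simp [hC, hb, hd]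
  have hbij : Function.Bijective (systemMap N h) :=
    ⟨hinj, LinearMap.injective_iff_surjective.mp hinj⟩
  obtain ⟨p, hp, huniq⟩ := hbij.existsUnique
    (fun β => ∫ x in (0:ℝ)..1, psi2 (x - h * (β : ℕ)), 1, 1 - Real.exp (-1))
  refine ⟨p, ⟨fun β => congrFun (congrArg Prod.fst hp) β, congrArg (fun r => r.2.1) hp,
    congrArg (fun r => r.2.2) hp⟩, ?_⟩
  rintro p' ⟨h1, h2, h3⟩
  exact huniq p' (Prod.ext (funext h1) (Prod.ext h2 h3))
end
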